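/- Let α ∈ (0,1) be irrational and let (Ω(α),T) be the Sturmian subshift with rotation number α. Then every locally constant A : Ω(α) → SL(2,ℝ) is uniform: there is Λ ∈ ℝ such that (1/n) log‖A(n,ω)‖ → Λ as n → ∞ uniformly in ω ∈ Ω(α). -/

import Mathlib

open Filter Topology MeasureTheory

noncomputable section

abbrev SL2 := Matrix.SpecialLinearGroup (Fin 2) ℝ

/-- Operator norm of a 2×2 real matrix acting on Euclidean ℝ². -/
def matNorm (M : Matrix (Fin 2) (Fin 2) ℝ) : ℝ :=
  ‖LinearMap.toContinuousLinearMap (Matrix.toEuclideanLin M)‖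

/-- Norm of an element of SL(2,ℝ). -/
def slNorm (M : SL2) : ℝ := matNorm (M : Matrix (Fin 2) (Fin 2) ℝ)

/-- Action of an SL(2,ℝ) matrix on a euclidean vector. -/
def slAct (M : SL2) (v : EuclideanSpace ℝ (Fin 2)) : EuclideanSpace ℝ (Fin 2) :=
  Matrix.toEuclideanLin (M : Matrix (Fin 2) (Fin 2) ℝ) v

variable {𝒜 : Type*}

/-- The shift by `k` on two-sided sequences; `shift 1` is the left shift `T`. -/
def shift (k : ℤ) (ω : ℤ → 𝒜) : ℤ → 𝒜 := fun n => ω (n + k)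

/-- `Ω ⊆ 𝒜^ℤ` is a subshift: nonempty, closed, invariant under the shift and its inverse. -/
structure IsSubshift [TopologicalSpace 𝒜] (Ω : Set (ℤ → 𝒜)) : Prop where
  nonempty : Ω.Nonempty
  closed : IsClosed Ω
  shift_mem : ∀ ω ∈ Ω, shift 1 ω ∈ Ω
  shift_neg_mem : ∀ ω ∈ Ω, shift (-1) ω ∈ Ω

/-- The word `ω(k) ω(k+1) ⋯ ω(k+n-1)`. -/
def word (ω : ℤ → 𝒜) (k : ℤ) (n : ℕ) : List 𝒜 := (List.range n).map fun i => ω (k + i)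

/-- `v` occurs in `ω` at position `k`. -/
def occursAt (v : List 𝒜) (ω : ℤ → 𝒜) (k : ℤ) : Prop := v = word ω k v.length

/-- The words of length `n` occurring in elements of `Ω`. -/
def WordsN (Ω : Set (ℤ → 𝒜)) (n : ℕ) : Set (List 𝒜) :=
  {v | ∃ ω ∈ Ω, ∃ k : ℤ, v = word ω k n}

/-- The (nonempty) finite words occurring in elements of `Ω`. -/
def Words (Ω : Set (ℤ → 𝒜)) : Set (List 𝒜) :=
  {v | 1 ≤ v.length ∧ v ∈ WordsN Ω v.length}

/-- `A` is locally constant on `Ω`: its value depends only on a finite window around 0. -/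
def LocConstOn (Ω : Set (ℤ → 𝒜)) {β : Type*} (A : (ℤ → 𝒜) → β) : Prop :=
  ∃ N : ℕ, ∀ ω ∈ Ω, ∀ ρ ∈ Ω, (∀ i : ℤ, |i| ≤ (N : ℤ) → ω i = ρ i) → A ω = A ρ

/-- The positive part of the cocycle: `cocycleP A n ω = A(T^{n-1}ω) ⋯ A(ω)`. -/
def cocycleP (A : (ℤ → 𝒜) → SL2) : ℕ → (ℤ → 𝒜) → SL2
  | 0, _ => 1
  | n + 1, ω => A (shift n ω) * cocycleP A n ω

/-- The full cocycle over the shift, `n ∈ ℤ`. -/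
def cocycle (A : (ℤ → 𝒜) → SL2) (n : ℤ) (ω : ℤ → 𝒜) : SL2 :=
  if 0 ≤ n then cocycleP A n.toNat ω else (cocycleP A (-n).toNat (shift n ω))⁻¹

/-- `A` is uniform on `Ω`: `(1/n) log‖A(n,ω)‖` converges uniformly on `Ω`. -/
def IsUniform (Ω : Set (ℤ → 𝒜)) (A : (ℤ → 𝒜) → SL2) : Prop :=
  ∃ Λ : ℝ, TendstoUniformlyOn
    (fun (n : ℕ) (ω : ℤ → 𝒜) => Real.log (slNorm (cocycle A n ω)) / n)
    (fun _ => Λ) atTop Ω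

/-- The number of occurrences of `v` in `ω(1)⋯ω(n)`. -/
def occCount (v : List 𝒜) (ω : ℤ → 𝒜) (n : ℕ) : ℕ :=
  Set.ncard {k : ℤ | 1 ≤ k ∧ k + v.length ≤ (n : ℤ) + 1 ∧ occursAt v ω k}

/-- Uniform existence of word frequencies (unique ergodicity). -/
def UniformWordFreq (Ω : Set (ℤ → 𝒜)) : Prop :=
  ∀ v ∈ Words Ω, ∃ ν : ℝ, TendstoUniformlyOn
    (fun (n : ℕ) (ω : ℤ → 𝒜) => (occCount v ω n : ℝ) / n) (fun _ => ν) atTop Ω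

/-- Minimality: every orbit is dense in `Ω`. -/
def IsMinimalSubshift [TopologicalSpace 𝒜] (Ω : Set (ℤ → 𝒜)) : Prop :=
  ∀ ω ∈ Ω, ∀ ρ ∈ Ω, ρ ∈ closure {σ : ℤ → 𝒜 | ∃ k : ℤ, σ = shift k ω}

/-- Condition (α): for all large `n`, the words of length `n` of `Ω` are exactly the
words `lead j (-k+1) ⋯ lead j (-k+n)`, `0 ≤ k ≤ n`, of the leading words. -/
def CondAlpha (Ω : Set (ℤ → 𝒜)) {r : ℕ} (lead : Fin r → (ℤ → 𝒜)) : Prop :=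
  (∀ j, lead j ∈ Ω) ∧ ∃ N : ℕ, ∀ n : ℕ, N ≤ n →
    WordsN Ω n = {v | ∃ j : Fin r, ∃ k : ℕ, k ≤ n ∧ v = word (lead j) (1 - (k : ℤ)) n}

/-- Condition (β): for every locally constant cocycle the Lyapunov limits along the
leading words exist in both time directions and all have the same value. -/
def CondBeta (Ω : Set (ℤ → 𝒜)) {r : ℕ} (lead : Fin r → (ℤ → 𝒜)) : Prop :=
  ∀ A : (ℤ → 𝒜) → SL2, LocConstOn Ω A → ∃ Λ : ℝ, ∀ j : Fin r,
    Tendsto (fun n : ℕ => Real.log (slNorm (cocycle A n (lead j))) / n) atTop (𝓝 Λ) ∧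
    Tendsto (fun n : ℕ => Real.log (slNorm (cocycle A (-(n : ℤ)) (lead j))) / n) atTop (𝓝 Λ)

/-- Condition (γ): along the leading words, for every locally constant cocycle and every
nonzero vector, at most one of the two one-sided exponents is negative. -/
def CondGamma (Ω : Set (ℤ → 𝒜)) {r : ℕ} (lead : Fin r → (ℤ → 𝒜)) : Prop :=
  ∀ A : (ℤ → 𝒜) → SL2, LocConstOn Ω A → ∀ j : Fin r,
    ∀ v : EuclideanSpace ℝ (Fin 2), v ≠ 0 →
    ¬ (limsup (fun n : ℕ => Real.log ‖slAct (cocycle A n (lead j)) v‖ / n) atTop < 0 ∧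
       limsup (fun n : ℕ => Real.log ‖slAct (cocycle A (-(n : ℤ)) (lead j)) v‖ / n) atTop < 0)

/-- The leading sequence condition (LSC). -/
def SatisfiesLSC (Ω : Set (ℤ → 𝒜)) : Prop :=
  ∃ (r : ℕ) (lead : Fin r → (ℤ → 𝒜)), CondAlpha Ω lead ∧ CondBeta Ω lead ∧ CondGamma Ω lead

/-- `F` is subadditive on the words of `Ω`. -/
def SubadditiveOn (Ω : Set (ℤ → 𝒜)) (F : List 𝒜 → ℝ) : Prop :=
  ∀ x y : List 𝒜, x ∈ Words Ω → y ∈ Words Ω → (x ++ y) ∈ Words Ω → F (x ++ y) ≤ F x + F y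

/-- `Fb` is the asymptotic mean `lim_n max { F x / n : x ∈ W(Ω)_n }` of `F`. -/
def IsAsympMean (Ω : Set (ℤ → 𝒜)) (F : List 𝒜 → ℝ) (Fb : ℝ) : Prop :=
  Tendsto (fun n : ℕ => sSup ((fun x => F x / n) '' WordsN Ω n)) atTop (𝓝 Fb)

/-- Maximal number of pairwise disjoint occurrences of `v` in `ω(1)⋯ω(n)`. -/
def disjCount (v : List 𝒜) (ω : ℤ → 𝒜) (n : ℕ) : ℕ :=
  sSup {m : ℕ | ∃ S : Finset ℤ, S.card = m ∧
    (∀ k ∈ S, 1 ≤ k ∧ k + v.length ≤ (n : ℤ) + 1 ∧ occursAt v ω k) ∧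
    (∀ k ∈ S, ∀ l ∈ S, k ≠ l → (v.length : ℤ) ≤ |k - l|)}

/-- Condition (PQ) for the one-sided word `p(1)p(2)⋯`. -/
def CondPQ (p : ℤ → 𝒜) : Prop :=
  ∃ c : ℝ, 0 < c ∧ ∀ m : ℕ, 1 ≤ m →
    c ≤ liminf (fun n : ℕ => (m : ℝ) / n * disjCount (word p 1 m) p n) atTop

/-- ℓ²(ℤ) over the reals. -/
abbrev Ell2Z : Type := lp (fun _ : ℤ => ℝ) 2

/-- `H` acts as the Jacobi operator with coefficients `f, g` at `ω`. -/
def IsJacobiAt (f g : (ℤ → 𝒜) → ℝ) (ω : ℤ → 𝒜) (H : Ell2Z →L[ℝ] Ell2Z) : Prop :=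
  ∀ u : Ell2Z, ∀ n : ℤ,
    (H u : ∀ _ : ℤ, ℝ) n =
      f (shift n ω) * (u : ∀ _ : ℤ, ℝ) (n - 1) + f (shift (n + 1) ω) * (u : ∀ _ : ℤ, ℝ) (n + 1)
        + g (shift n ω) * (u : ∀ _ : ℤ, ℝ) n

/-- The pair `(f,g)` is periodic on `Ω`. -/
def PeriodicPair (Ω : Set (ℤ → 𝒜)) (f g : (ℤ → 𝒜) → ℝ) : Prop :=
  ∃ P : ℕ, 1 ≤ P ∧ ∀ ω ∈ Ω, f (shift (P : ℤ) ω) = f ω ∧ g (shift (P : ℤ) ω) = g ω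

/-- `S ⊆ ℝ` is a Cantor set of Lebesgue measure zero: compact, empty interior,
no isolated points, Lebesgue measure zero. -/
def IsMeasureZeroCantor (S : Set ℝ) : Prop :=
  IsCompact S ∧ interior S = ∅ ∧ Perfect S ∧ volume S = 0

/-- `n` copies of `x` separated by `n-1` copies of the letter `l`. -/
def sepJoin (x : List 𝒜) (l : 𝒜) (m : ℕ) : List 𝒜 :=
  (List.replicate (m - 1) (x ++ [l])).flatten ++ x

/-- `Blk a nseq (k+1)` is the block `block(k)` of the simple Toeplitz construction
(with `Blk a nseq 0 = block(-1) = ε`). -/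
def Blk (a : ℕ → 𝒜) (nseq : ℕ → ℕ) : ℕ → List 𝒜
  | 0 => []
  | k + 1 => sepJoin (Blk a nseq k) (a k) (nseq k)

/-- `p(1)p(2)⋯` is the one-sided word `block(∞)`: every block is a prefix of it. -/
def IsBlockInf (a : ℕ → 𝒜) (nseq : ℕ → ℕ) (p : ℤ → 𝒜) : Prop :=
  ∀ k : ℕ, word p 1 (Blk a nseq k).length = Blk a nseq k

/-- The simple Toeplitz subshift generated by `block(∞) = p(1)p(2)⋯`: all two-sided
sequences whose finite subwords all occur in `block(∞)`. -/
def toeplitzΩ (p : ℤ → 𝒜) : Set (ℤ → 𝒜) :=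
  {ω | ∀ (i : ℤ) (n : ℕ), ∃ l : ℤ, 1 ≤ l ∧ word ω i n = word p l n}

/-- The eventual alphabet: letters occurring infinitely often in `(a_k)`. -/
def EvAlph (a : ℕ → 𝒜) : Set 𝒜 := {x | ∀ K : ℕ, ∃ k, K ≤ k ∧ a k = x}

/-- The leading word `p^R v | p`: equals `p(n+1)` for `n ≥ 0`, carries the word `v` on
positions `-|v|, …, -1`, and equals `p(-(n+|v|))` for `n < -|v|`. -/
def leadWordGen (p : ℤ → 𝒜) (v : List 𝒜) : ℤ → 𝒜 := fun n =>
  if 0 ≤ n then p (n + 1)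
  else if -(v.length : ℤ) ≤ n then v.getD (n + v.length).toNat (p 1)
  else p (-(n + v.length))

/-- The Gauss map. -/
def gaussMap (x : ℝ) : ℝ := 1 / x - ⌊1 / x⌋

/-- `cfSeq α n` is the continued fraction coefficient `a_{n+1}` of `α`. -/
def cfSeq (α : ℝ) (n : ℕ) : ℕ := ⌊1 / (gaussMap^[n] α)⌋₊

/-- The standard Sturmian words: `sturmW α (n+1) = s_n`, `sturmW α 0 = s_{-1} = 1`,
`sturmW α 1 = s_0 = 0`, `s_1 = s_0^{a_1 - 1} s_{-1}`, `s_n = s_{n-1}^{a_n} s_{n-2}`. -/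
def sturmW (α : ℝ) : ℕ → List (Fin 2)
  | 0 => [1]
  | 1 => [0]
  | 2 => List.replicate (cfSeq α 0 - 1) (0 : Fin 2) ++ [1]
  | n + 3 => (List.replicate (cfSeq α (n + 1)) (sturmW α (n + 2))).flatten ++ sturmW α (n + 1)

/-- The Sturmian subshift with rotation number `α`: all two-sided sequences whose finite
subwords occur in some `s_n`. -/
def sturmΩ (α : ℝ) : Set (ℤ → Fin 2) :=
  {ω | ∀ (i : ℤ) (n : ℕ), ∃ m : ℕ, word ω i n <:+: sturmW α m}

/-- The positive cocycle of a map `A` over a transformation `T`: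
`cocycleH T A n ω = A(T^{n-1}ω) ⋯ A(ω)`. -/
def cocycleH {Ω : Type*} (T : Ω → Ω) (A : Ω → SL2) : ℕ → Ω → SL2
  | 0, _ => 1
  | n + 1, ω => A (T^[n] ω) * cocycleH T A n ω

end

/-!
Let `Λ` be the limit of `(1/n) sup_ω log ‖A(n,ω)‖`, which exists by Fekete's lemma. The upper
bound `log ‖A(n,ω)‖ ≤ (Λ + ε) n` for large `n` is then automatic, and only the lower bound needs
an argument.

*From repetitivity to a lower bound at one scale.* At arbitrarily large scales `L`, every word of
length `L` of `Ω` occurs in every word of length `8 L`. If `‖A(m,ρ)‖` were too small for some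
`ρ ∈ Ω` and some `m` with `L/4 ≤ m ≤ L`, this matrix would reappear on every orbit
within a time comparable to `L` and push `sup_ω log ‖A(n,ω)‖` below `Λ n` for some `n`, which
contradicts subadditivity.

*From one scale to all scales.* In `SL(2,ℝ)` one has
`‖AB‖ ‖BC‖ ≤ ‖ABC‖ ‖B‖ + ‖A‖ ‖C‖`, since for `q = BCx` the component of `Bv` orthogonal to `q` is
the area spanned by `q` and `Bv` divided by `‖q‖`, and `B` preserves area. When the three words are
long and nearly reach the maximal growth, the last term is negligible, so the norms multiply up to
a bounded loss per block.

*Repetitivity.* Put `u = s_n`, `w = s_{n-1}`, and let `u⁻` be `u` without its last letter. As `uw`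
and `wu` differ at most in their last two letters, `uu⁻` is a prefix of `yuu` for every
concatenation `y` of the blocks `u` and `uw`. Hence `uu⁻` occurs in every subword of length `4|u|`
of such a concatenation, while every subword shorter than `u` occurs in `uu⁻`.
-/

section PlaneAvalanche

open scoped InnerProductSpace

variable {E F G : Type*} [NormedAddCommGroup E] [InnerProductSpace ℝ E]
  [NormedAddCommGroup F] [NormedSpace ℝ F] [NormedAddCommGroup G] [NormedSpace ℝ G]

theorem opNorm_mul_opNorm_le_of_forall {F' G' : Type*} [NormedAddCommGroup F'] [NormedSpace ℝ F']
    [NormedAddCommGroup G'] [NormedSpace ℝ G'] {f : F →L[ℝ] F'} {g : G →L[ℝ] G'} {K : ℝ}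
    (hK : 0 ≤ K) (h : ∀ x y, ‖f x‖ * ‖g y‖ ≤ K * ‖x‖ * ‖y‖) : ‖f‖ * ‖g‖ ≤ K := by
  have hf (y : G) : ‖f‖ * ‖g y‖ ≤ K * ‖y‖ := by
    rw [mul_comm, ← norm_norm (g y), ← norm_smul]
    refine ContinuousLinearMap.opNorm_le_bound _ (by positivity) fun x => ?_
    rw [smul_apply, norm_smul, norm_norm, mul_comm, mul_right_comm]
    exact h x y
  rw [← norm_norm f, ← norm_smul]
  refine ContinuousLinearMap.opNorm_le_bound _ hK fun y => ?_
  simpa only [smul_apply, norm_smul, norm_norm] using hf y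

variable [Fact (Module.finrank ℝ E = 2)] (o : Orientation ℝ E (Fin 2))

theorem areaForm_map_map (B : E →ₗ[ℝ] E) (x y : E) :
    o.areaForm (B x) (B y) = LinearMap.det B * o.areaForm x y := by
  let b := o.finOrthonormalBasis two_pos Fact.out
  have hb : o.volumeForm = b.toBasis.det :=
    o.volumeForm_robust b (o.finOrthonormalBasis_orientation two_pos Fact.out)
  simp only [o.areaForm_to_volumeForm, hb, ← Module.Basis.det_comp]
  congr 1
  ext i
  fin_cases i <;> rfl

theorem inner_smul_add_areaForm_smul (q p : E) :
    ⟪q, p⟫_ℝ • q + o.areaForm q p • o.rightAngleRotation q = ‖q‖ ^ 2 • p := by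
  refine ext_inner_right ℝ fun a => ?_
  simp only [inner_add_left, real_inner_smul_left, o.inner_rightAngleRotation_left]
  exact o.inner_mul_inner_add_areaForm_mul_areaForm q p a

theorem abs_det_le_opNorm_sq (B : E →L[ℝ] E) : |LinearMap.det (B : E →ₗ[ℝ] E)| ≤ ‖B‖ ^ 2 := by
  have : FiniteDimensional ℝ E := .of_fact_finrank_eq_two
  obtain ⟨o⟩ : Nonempty (Orientation ℝ E (Fin 2)) :=
    ⟨(Module.finBasisOfFinrankEq ℝ E Fact.out).orientation⟩
  have : Nontrivial E :=
    Module.nontrivial_of_finrank_pos (R := ℝ) (Fact.out (p := Module.finrank ℝ E = 2) ▸ two_pos)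
  obtain ⟨v, hv⟩ := exists_ne (0 : E)
  have hv : 0 < ‖v‖ ^ 2 := by positivity
  refine le_of_mul_le_mul_right ?_ hv
  have hdet := areaForm_map_map o (B : E →ₗ[ℝ] E) v (o.rightAngleRotation v)
  rw [o.areaForm_rightAngleRotation_right, real_inner_self_eq_norm_sq] at hdet
  calc |LinearMap.det (B : E →ₗ[ℝ] E)| * ‖v‖ ^ 2
      = |o.areaForm (B v) (B (o.rightAngleRotation v))| := by
        rw [← abs_of_pos hv, ← abs_mul, ← hdet]
        rfl
    _ ≤ ‖B v‖ * ‖B (o.rightAngleRotation v)‖ := o.abs_areaForm_le _ _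
    _ ≤ (‖B‖ * ‖v‖) * (‖B‖ * ‖o.rightAngleRotation v‖) := by
        gcongr <;> exact B.le_opNorm _
    _ = ‖B‖ ^ 2 * ‖v‖ ^ 2 := by rw [LinearIsometryEquiv.norm_map]; ring

theorem norm_mul_norm_apply_le (A : E →L[ℝ] F) (p q : E) :
    ‖q‖ * ‖A p‖ ≤ ‖p‖ * ‖A q‖ + |o.areaForm q p| * ‖A‖ := by
  rcases eq_or_ne q 0 with rfl | hq
  · simp
  have hq : 0 < ‖q‖ := norm_pos_iff.2 hq
  refine le_of_mul_le_mul_left ?_ hq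
  calc ‖q‖ * (‖q‖ * ‖A p‖) = ‖A (‖q‖ ^ 2 • p)‖ := by
        rw [map_smul, norm_smul, norm_pow, norm_norm, sq, mul_assoc]
    _ = ‖⟪q, p⟫_ℝ • A q + o.areaForm q p • A (o.rightAngleRotation q)‖ := by
        rw [← inner_smul_add_areaForm_smul o q p, map_add, map_smul, map_smul]
    _ ≤ |⟪q, p⟫_ℝ| * ‖A q‖ + |o.areaForm q p| * ‖A (o.rightAngleRotation q)‖ := by
        simpa only [norm_smul, Real.norm_eq_abs] using
          norm_add_le (⟪q, p⟫_ℝ • A q) (o.areaForm q p • A (o.rightAngleRotation q))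
    _ ≤ (‖q‖ * ‖p‖) * ‖A q‖ + |o.areaForm q p| * (‖A‖ * ‖q‖) := by
        gcongr
        · exact abs_real_inner_le_norm q p
        · simpa only [LinearIsometryEquiv.norm_map] using A.le_opNorm (o.rightAngleRotation q)
    _ = ‖q‖ * (‖p‖ * ‖A q‖ + |o.areaForm q p| * ‖A‖) := by ring

theorem opNorm_comp_mul_opNorm_comp_le (A : E →L[ℝ] F) (B : E →L[ℝ] E) (C : G →L[ℝ] E) :
    ‖A ∘L B‖ * ‖B ∘L C‖ ≤
      ‖A ∘L B ∘L C‖ * ‖B‖ + |LinearMap.det (B : E →ₗ[ℝ] E)| * (‖A‖ * ‖C‖) := by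
  have : FiniteDimensional ℝ E := .of_fact_finrank_eq_two
  obtain ⟨o⟩ : Nonempty (Orientation ℝ E (Fin 2)) :=
    ⟨(Module.finBasisOfFinrankEq ℝ E Fact.out).orientation⟩
  refine opNorm_mul_opNorm_le_of_forall (by positivity) fun v x => ?_
  have hdet : o.areaForm (B (C x)) (B v) = LinearMap.det (B : E →ₗ[ℝ] E) * o.areaForm (C x) v :=
    areaForm_map_map o (B : E →ₗ[ℝ] E) (C x) v
  simp only [ContinuousLinearMap.comp_apply]
  calc ‖A (B v)‖ * ‖B (C x)‖
      ≤ ‖B v‖ * ‖A (B (C x))‖ + |o.areaForm (B (C x)) (B v)| * ‖A‖ := by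
        rw [mul_comm]
        exact norm_mul_norm_apply_le o A (B v) (B (C x))
    _ = ‖B v‖ * ‖(A ∘L B ∘L C) x‖ +
          |LinearMap.det (B : E →ₗ[ℝ] E)| * |o.areaForm (C x) v| * ‖A‖ := by
        rw [hdet, abs_mul, ContinuousLinearMap.comp_apply, ContinuousLinearMap.comp_apply]
    _ ≤ (‖B‖ * ‖v‖) * (‖A ∘L B ∘L C‖ * ‖x‖) +
          |LinearMap.det (B : E →ₗ[ℝ] E)| * ((‖C‖ * ‖x‖) * ‖v‖) * ‖A‖ := by
        gcongr
        · exact B.le_opNorm v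
        · exact ContinuousLinearMap.le_opNorm _ x
        · exact (o.abs_areaForm_le _ _).trans (by gcongr; exact C.le_opNorm x)
    _ = (‖A ∘L B ∘L C‖ * ‖B‖ + |LinearMap.det (B : E →ₗ[ℝ] E)| * (‖A‖ * ‖C‖)) *
          ‖v‖ * ‖x‖ := by ring

end PlaneAvalanche

section SpecialLinearNorm

theorem slNorm_eq_norm_toEuclideanCLM (M : SL2) :
    slNorm M = ‖Matrix.toEuclideanCLM (n := Fin 2) (𝕜 := ℝ) M.1‖ := rfl

theorem det_toEuclideanCLM_specialLinearGroup (M : SL2) :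
    LinearMap.det (Matrix.toEuclideanCLM (n := Fin 2) (𝕜 := ℝ) M.1 :
      EuclideanSpace ℝ (Fin 2) →ₗ[ℝ] EuclideanSpace ℝ (Fin 2)) = 1 := by
  rw [Matrix.coe_toEuclideanCLM_eq_toEuclideanLin, Matrix.toEuclideanLin_eq_toLin_orthonormal,
    LinearMap.det_toLin, M.det_coe]

theorem slNorm_mul_le (M N : SL2) : slNorm (M * N) ≤ slNorm M * slNorm N := by
  simp only [slNorm_eq_norm_toEuclideanCLM]
  rw [Matrix.SpecialLinearGroup.coe_mul, map_mul]
  exact norm_mul_le _ _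

theorem slNorm_one : slNorm 1 = 1 := by
  rw [slNorm_eq_norm_toEuclideanCLM, Matrix.SpecialLinearGroup.coe_one, map_one, norm_one]

instance fact_finrank_euclideanSpace_two :
    Fact (Module.finrank ℝ (EuclideanSpace ℝ (Fin 2)) = 2) :=
  ⟨finrank_euclideanSpace_fin⟩

theorem one_le_slNorm (M : SL2) : 1 ≤ slNorm M := by
  have h := abs_det_le_opNorm_sq (Matrix.toEuclideanCLM (n := Fin 2) (𝕜 := ℝ) M.1)
  rw [det_toEuclideanCLM_specialLinearGroup, abs_one] at h
  exact (one_le_sq_iff₀ (norm_nonneg _)).1 h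

theorem slNorm_mul_mul_slNorm_mul_le (M N P : SL2) :
    slNorm (M * N) * slNorm (N * P) ≤ slNorm (M * N * P) * slNorm N + slNorm M * slNorm P := by
  let toCLM (L : SL2) := Matrix.toEuclideanCLM (n := Fin 2) (𝕜 := ℝ) L.1
  have h := opNorm_comp_mul_opNorm_comp_le (toCLM M) (toCLM N) (toCLM P)
  rw [det_toEuclideanCLM_specialLinearGroup, abs_one, one_mul] at h
  simp only [slNorm_eq_norm_toEuclideanCLM, Matrix.SpecialLinearGroup.coe_mul, map_mul, mul_assoc]
  exact h

end SpecialLinearNorm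

section CocycleGrowth

variable {𝒜 : Type*} {Ω : Set (ℤ → 𝒜)} {A : (ℤ → 𝒜) → SL2}

theorem shift_shift (j k : ℤ) (ω : ℤ → 𝒜) : shift j (shift k ω) = shift (j + k) ω := by
  funext n
  simp only [shift, add_assoc]

theorem cocycleP_add (m n : ℕ) (ω : ℤ → 𝒜) :
    cocycleP A (m + n) ω = cocycleP A n (shift m ω) * cocycleP A m ω := by
  induction n with
  | zero => simp only [add_zero, cocycleP, one_mul]
  | succ n ih =>
    rw [← add_assoc, cocycleP, cocycleP, ih, shift_shift, mul_assoc, Nat.cast_add,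
      add_comm (m : ℤ)]

/-- The logarithmic growth `log ‖A(n,ω)‖` of the cocycle generated by `A`. -/
noncomputable def logNorm (A : (ℤ → 𝒜) → SL2) (n : ℕ) (ω : ℤ → 𝒜) : ℝ :=
  Real.log (slNorm (cocycleP A n ω))

theorem exp_logNorm (n : ℕ) (ω : ℤ → 𝒜) :
    Real.exp (logNorm A n ω) = slNorm (cocycleP A n ω) :=
  Real.exp_log (one_pos.trans_le (one_le_slNorm _))

theorem logNorm_nonneg (n : ℕ) (ω : ℤ → 𝒜) : 0 ≤ logNorm A n ω :=
  Real.log_nonneg (one_le_slNorm _)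

theorem logNorm_add_le (m n : ℕ) (ω : ℤ → 𝒜) :
    logNorm A (m + n) ω ≤ logNorm A m ω + logNorm A n (shift m ω) := by
  rw [← Real.exp_le_exp, Real.exp_add, mul_comm, exp_logNorm, exp_logNorm, exp_logNorm,
    cocycleP_add]
  exact slNorm_mul_le _ _

theorem exp_logNorm_mul_exp_logNorm_le (m n p : ℕ) (ω : ℤ → 𝒜) :
    Real.exp (logNorm A (m + n) ω) * Real.exp (logNorm A (n + p) (shift m ω)) ≤
      Real.exp (logNorm A (m + n + p) ω) * Real.exp (logNorm A n (shift m ω)) +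
        Real.exp (logNorm A m ω) * Real.exp (logNorm A p (shift (m + n : ℕ) ω)) := by
  have h := slNorm_mul_mul_slNorm_mul_le (cocycleP A p (shift (m + n : ℕ) ω))
    (cocycleP A n (shift m ω)) (cocycleP A m ω)
  have hshift : shift n (shift m ω) = shift (m + n : ℕ) ω := by
    rw [shift_shift, Nat.cast_add, add_comm]
  simp only [exp_logNorm, cocycleP_add (m + n) p, cocycleP_add m n, cocycleP_add n p, hshift]
  rw [mul_comm (slNorm (_ * _)), mul_comm (slNorm (cocycleP A m ω))]
  simpa only [mul_assoc] using h

theorem sub_le_of_exp_mul_exp_le {a b c ab bc abc κ : ℝ} (hab : a + b - κ ≤ ab)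
    (hbc : b + c - κ + 1 ≤ bc) (hκ : κ ≤ b)
    (h : Real.exp ab * Real.exp bc ≤ Real.exp abc * Real.exp b + Real.exp a * Real.exp c) :
    ab + c - κ ≤ abc := by
  by_contra! hlt
  simp only [← Real.exp_add] at h
  have hb : Real.exp (abc + b) < Real.exp (ab + bc - 1) := Real.exp_lt_exp.2 (by linarith)
  have hac : Real.exp (a + c) ≤ Real.exp (ab + bc - 1) := Real.exp_le_exp.2 (by linarith)
  have htwo : 2 * Real.exp (ab + bc - 1) ≤ Real.exp (ab + bc) := by
    calc 2 * Real.exp (ab + bc - 1) ≤ Real.exp 1 * Real.exp (ab + bc - 1) := by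
          gcongr
          linarith [Real.add_one_le_exp 1]
      _ = Real.exp (ab + bc) := by rw [← Real.exp_add]; ring_nf
  linarith

theorem bddAbove_logNorm_image (hΩ : ∀ n : ℕ, Set.MapsTo (shift (n : ℤ)) Ω Ω)
    (hA : BddAbove ((fun ω => slNorm (A ω)) '' Ω)) (n : ℕ) :
    BddAbove (logNorm A n '' Ω) := by
  obtain ⟨B, hB⟩ := hA
  refine ⟨n * Real.log B, Set.forall_mem_image.2 fun ω hω => ?_⟩
  induction n with
  | zero => simp [logNorm, cocycleP, slNorm_one]
  | succ n ih =>
    have hone : logNorm A 1 (shift n ω) ≤ Real.log B := by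
      refine Real.log_le_log (one_pos.trans_le (one_le_slNorm _)) (hB ⟨shift n ω, hΩ n hω, ?_⟩)
      simp [cocycleP, shift_shift]
    push_cast
    linarith [logNorm_add_le (A := A) n 1 ω]

/-- The maximal growth `sup_{ω ∈ Ω} log ‖A(n,ω)‖` at time `n`. -/
noncomputable def maxLogNorm (Ω : Set (ℤ → 𝒜)) (A : (ℤ → 𝒜) → SL2) (n : ℕ) : ℝ :=
  sSup (logNorm A n '' Ω)

/-- The exponential growth rate of `sup_{ω ∈ Ω} ‖A(n,ω)‖`, written as the infimum which Fekete's
lemma identifies with `lim maxLogNorm Ω A n / n`. -/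
noncomputable def maxExponent (Ω : Set (ℤ → 𝒜)) (A : (ℤ → 𝒜) → SL2) : ℝ :=
  sInf ((fun n : ℕ => maxLogNorm Ω A n / n) '' Set.Ici 1)

theorem maxLogNorm_nonneg (n : ℕ) : 0 ≤ maxLogNorm Ω A n :=
  Real.sSup_nonneg (Set.forall_mem_image.2 fun ω _ => logNorm_nonneg n ω)

theorem bddBelow_range_maxLogNorm_div :
    BddBelow (Set.range fun n : ℕ => maxLogNorm Ω A n / n) :=
  ⟨0, Set.forall_mem_range.2 fun n => div_nonneg (maxLogNorm_nonneg n) n.cast_nonneg⟩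

theorem logNorm_le_maxLogNorm (hbdd : ∀ n, BddAbove (logNorm A n '' Ω)) (n : ℕ) {ω : ℤ → 𝒜}
    (hω : ω ∈ Ω) : logNorm A n ω ≤ maxLogNorm Ω A n :=
  le_csSup (hbdd n) ⟨ω, hω, rfl⟩

theorem subadditive_maxLogNorm (hΩ : ∀ n : ℕ, Set.MapsTo (shift (n : ℤ)) Ω Ω)
    (hbdd : ∀ n, BddAbove (logNorm A n '' Ω)) : Subadditive (maxLogNorm Ω A) := by
  refine fun m n => Real.sSup_le (Set.forall_mem_image.2 fun ω hω => ?_)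
    (add_nonneg (maxLogNorm_nonneg m) (maxLogNorm_nonneg n))
  exact (logNorm_add_le m n ω).trans (add_le_add (logNorm_le_maxLogNorm hbdd m hω)
    (logNorm_le_maxLogNorm hbdd n (hΩ m hω)))

theorem tendsto_maxLogNorm_div (hΩ : ∀ n : ℕ, Set.MapsTo (shift (n : ℤ)) Ω Ω)
    (hbdd : ∀ n, BddAbove (logNorm A n '' Ω)) :
    Tendsto (fun n : ℕ => maxLogNorm Ω A n / n) atTop (𝓝 (maxExponent Ω A)) := by
  have h := (subadditive_maxLogNorm hΩ hbdd).tendsto_lim bddBelow_range_maxLogNorm_div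
  rwa [Subadditive.lim] at h

theorem maxExponent_mul_le_maxLogNorm (n : ℕ) : maxExponent Ω A * n ≤ maxLogNorm Ω A n := by
  rcases n.eq_zero_or_pos with rfl | hn
  · simpa using maxLogNorm_nonneg 0
  · rw [← le_div_iff₀ (Nat.cast_pos.2 hn)]
    exact csInf_le (bddBelow_range_maxLogNorm_div.mono (Set.image_subset_range _ _))
      ⟨n, hn, rfl⟩

theorem maxExponent_nonneg : 0 ≤ maxExponent Ω A :=
  Real.sInf_nonneg (Set.forall_mem_image.2 fun n _ =>
    div_nonneg (maxLogNorm_nonneg n) n.cast_nonneg)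

theorem eventually_logNorm_lt (hΩ : ∀ n : ℕ, Set.MapsTo (shift (n : ℤ)) Ω Ω)
    (hbdd : ∀ n, BddAbove (logNorm A n '' Ω)) {δ : ℝ} (hδ : 0 < δ) :
    ∀ᶠ n : ℕ in atTop, ∀ ω ∈ Ω, logNorm A n ω < (maxExponent Ω A + δ) * n := by
  filter_upwards [(tendsto_maxLogNorm_div hΩ hbdd).eventually_lt_const
    (lt_add_of_pos_right _ hδ), eventually_gt_atTop 0] with n hn hpos ω hω
  rw [div_lt_iff₀ (Nat.cast_pos.2 hpos)] at hn
  exact (logNorm_le_maxLogNorm hbdd n hω).trans_lt hn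

theorem exists_logNorm_le_add (hΩ : ∀ n : ℕ, Set.MapsTo (shift (n : ℤ)) Ω Ω)
    (hbdd : ∀ n, BddAbove (logNorm A n '' Ω)) {δ : ℝ} (hδ : 0 < δ) :
    ∃ C, ∀ n, ∀ ω ∈ Ω, logNorm A n ω ≤ (maxExponent Ω A + δ) * n + C := by
  obtain ⟨n₀, hn₀⟩ := eventually_atTop.1 (eventually_logNorm_lt hΩ hbdd hδ)
  have hsum : 0 ≤ ∑ k ∈ Finset.range n₀, maxLogNorm Ω A k :=
    Finset.sum_nonneg fun k _ => maxLogNorm_nonneg k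
  refine ⟨∑ k ∈ Finset.range n₀, maxLogNorm Ω A k, fun n ω hω => ?_⟩
  rcases le_or_gt n₀ n with hn | hn
  · linarith [hn₀ n hn ω hω]
  · have hle := Finset.single_le_sum (fun k _ => maxLogNorm_nonneg (Ω := Ω) (A := A) k)
      (Finset.mem_range.2 hn)
    have hpos : 0 ≤ (maxExponent Ω A + δ) * n :=
      mul_nonneg (add_nonneg maxExponent_nonneg hδ.le) n.cast_nonneg
    linarith [logNorm_le_maxLogNorm hbdd n hω]

/-- Linear recurrence of the cocycle at scale `L`: each matrix `A(m,ρ)` with `m ≤ L` reappears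
along every orbit of `Ω` within time `K * L`. -/
def CocycleRecurrent (Ω : Set (ℤ → 𝒜)) (A : (ℤ → 𝒜) → SL2) (K L : ℕ) : Prop :=
  ∀ ω ∈ Ω, ∀ ρ ∈ Ω, ∀ m ≤ L, ∃ t ≤ K * L, cocycleP A m (shift t ω) = cocycleP A m ρ

theorem CocycleRecurrent.maxLogNorm_le (hΩ : ∀ n : ℕ, Set.MapsTo (shift (n : ℤ)) Ω Ω) {K L m : ℕ}
    (h : CocycleRecurrent Ω A K L) (hm : m ≤ L) {ρ : ℤ → 𝒜} (hρ : ρ ∈ Ω) {μ C : ℝ}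
    (hC : ∀ n, ∀ ω ∈ Ω, logNorm A n ω ≤ μ * n + C) :
    maxLogNorm Ω A ((K + 1) * L) ≤ μ * ((K + 1) * L - m) + 2 * C + logNorm A m ρ := by
  refine csSup_le (Set.Nonempty.image _ ⟨ρ, hρ⟩) (Set.forall_mem_image.2 fun ω hω => ?_)
  obtain ⟨t, ht, heq⟩ := h ω hω ρ hρ m hm
  obtain ⟨r, hr⟩ := Nat.exists_eq_add_of_le (by linarith : t + m ≤ (K + 1) * L)
  have hr' : ((K + 1) * L : ℝ) = t + m + r := mod_cast hr
  have hlog : logNorm A m (shift t ω) = logNorm A m ρ := by rw [logNorm, heq, logNorm]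
  rw [hr', hr]
  linarith [logNorm_add_le (A := A) (t + m) r ω, logNorm_add_le (A := A) t m ω, hC t ω hω,
    hC r _ (hΩ (t + m) hω)]

theorem frequently_le_logNorm_of_cocycleRecurrent
    (hΩ : ∀ n : ℕ, Set.MapsTo (shift (n : ℤ)) Ω Ω) (hbdd : ∀ n, BddAbove (logNorm A n '' Ω)) {K : ℕ}
    (h : ∃ᶠ L in atTop, CocycleRecurrent Ω A K L) {ε : ℝ} (hε : 0 < ε) :
    ∃ᶠ L in atTop, ∀ m : ℕ, L ≤ 4 * m → m ≤ L → ∀ ω ∈ Ω,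
      (maxExponent Ω A - ε) * m ≤ logNorm A m ω := by
  set Λ := maxExponent Ω A
  obtain ⟨δ, hδ, hδε⟩ : ∃ δ > 0, 8 * (K + 1) * δ = ε :=
    ⟨ε / (8 * (K + 1)), by positivity, by field_simp⟩
  obtain ⟨C, hC⟩ := exists_logNorm_le_add hΩ hbdd hδ
  have hlarge : ∀ᶠ L : ℕ in atTop, 16 * C < ε * L :=
    (tendsto_natCast_atTop_atTop.const_mul_atTop hε).eventually_gt_atTop _
  refine (h.and_eventually hlarge).mono fun L ⟨hL, hLC⟩ m hLm hmL ρ hρ => ?_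
  have hmax := (maxExponent_mul_le_maxLogNorm _).trans (hL.maxLogNorm_le hΩ hmL hρ hC)
  have hLm : (L : ℝ) ≤ 4 * m := mod_cast hLm
  push_cast at hmax
  have hεm : ε * L ≤ 4 * (ε * m) := by linarith [mul_le_mul_of_nonneg_left hLm hε.le]
  have hεL : 8 * ((K + 1) * δ * L) = ε * L := by rw [← hδε]; ring
  have hδm : 0 ≤ δ * m := by positivity
  linarith [hLC]

theorem logNorm_add_logNorm_shift_sub_le (hΩ : ∀ n : ℕ, Set.MapsTo (shift (n : ℤ)) Ω Ω) {l : ℕ}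
    (hl : 0 < l) {κ : ℝ} (hκ : ∀ ω ∈ Ω, κ ≤ logNorm A l ω)
    (hbase : ∀ n, l ≤ n → n ≤ 2 * l → ∀ ω ∈ Ω,
      logNorm A n ω + logNorm A l (shift n ω) - κ + 1 ≤ logNorm A (n + l) ω) :
    ∀ n, l ≤ n → ∀ ω ∈ Ω,
      logNorm A n ω + logNorm A l (shift n ω) - κ ≤ logNorm A (n + l) ω := by
  intro n
  induction n using Nat.strong_induction_on with
  | _ n ih =>
    intro hn ω hω
    rcases le_or_gt n (2 * l) with hn2 | hn2
    · linarith [hbase n hn hn2 ω hω]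
    obtain ⟨k, rfl⟩ := Nat.exists_eq_add_of_le' hn
    refine sub_le_of_exp_mul_exp_le (ih k (by lia) (by lia) ω hω) ?_ (hκ _ (hΩ k hω))
      (exp_logNorm_mul_exp_logNorm_le k l l ω)
    have h := hbase l le_rfl (by lia) _ (hΩ k hω)
    rwa [shift_shift, add_comm (l : ℤ), ← Nat.cast_add] at h

theorem mul_sub_le_logNorm {l : ℕ} (hl : 0 < l) {c : ℝ} (hc : 0 ≤ c)
    (hstep : ∀ n, l ≤ n → ∀ ω ∈ Ω, logNorm A n ω + c * l ≤ logNorm A (n + l) ω) (n : ℕ) :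
    ∀ ω ∈ Ω, c * (n - 2 * l) ≤ logNorm A n ω := by
  induction n using Nat.strong_induction_on with
  | _ n ih =>
    intro ω hω
    rcases le_or_gt n (2 * l) with hn | hn
    · have hn : (n : ℝ) - 2 * l ≤ 0 := by rw [sub_nonpos]; exact mod_cast hn
      exact (mul_nonpos_of_nonneg_of_nonpos hc hn).trans (logNorm_nonneg n ω)
    obtain ⟨k, rfl⟩ := Nat.exists_eq_add_of_le' (by lia : l ≤ n)
    have := ih k (by lia) ω hω
    push_cast
    linarith [hstep k (by lia) ω hω]

theorem eventually_le_logNorm (hΩ : ∀ n : ℕ, Set.MapsTo (shift (n : ℤ)) Ω Ω)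
    (hbdd : ∀ n, BddAbove (logNorm A n '' Ω)) {K : ℕ}
    (h : ∃ᶠ L in atTop, CocycleRecurrent Ω A K L) {ε : ℝ} (hε : 0 < ε)
    (hεΛ : 8 * ε ≤ maxExponent Ω A) :
    ∀ᶠ n : ℕ in atTop, ∀ ω ∈ Ω, (maxExponent Ω A - 9 * ε) * n ≤ logNorm A n ω := by
  set Λ := maxExponent Ω A
  obtain ⟨n₀, hn₀⟩ := eventually_atTop.1 (eventually_logNorm_lt hΩ hbdd hε)
  have hlarge : ∀ᶠ L : ℕ in atTop, 4 ≤ ε * L :=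
    (tendsto_natCast_atTop_atTop.const_mul_atTop hε).eventually_ge_atTop _
  obtain ⟨L, hlow, hεL, hL⟩ := ((frequently_le_logNorm_of_cocycleRecurrent hΩ hbdd h
    hε).and_eventually (hlarge.and (eventually_ge_atTop (4 * n₀ + 12)))).exists
  obtain ⟨l, hLl, hlL⟩ : ∃ l, L ≤ 4 * l ∧ 3 * l ≤ L := ⟨L / 4 + 1, by lia, by lia⟩
  have hl : 0 < l := by lia
  have hεl : 1 ≤ ε * l := by
    have : (L : ℝ) ≤ 4 * l := mod_cast hLl
    linarith [mul_le_mul_of_nonneg_left this hε.le]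
  have hκ : ∀ ω ∈ Ω, 7 * (ε * l) ≤ logNorm A l ω := fun ω hω => by
    have : 8 * ε * l ≤ Λ * l := by gcongr
    linarith [hlow l hLl (by lia) ω hω]
  have hstep := logNorm_add_logNorm_shift_sub_le hΩ hl hκ fun n _ hnl ω hω => by
    have hn : ε * n ≤ 2 * (ε * l) := by
      have : (n : ℝ) ≤ 2 * l := mod_cast hnl
      linarith [mul_le_mul_of_nonneg_left this hε.le]
    have hsum := hlow (n + l) (by lia) (by lia) ω hω
    push_cast at hsum
    linarith [hn₀ n (by lia) ω hω, hn₀ l (by lia) _ (hΩ n hω)]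
  have hgrowth := mul_sub_le_logNorm hl (sub_nonneg.2 hεΛ) fun n hn ω hω => by
    linarith [hstep n hn ω hω, hlow l hLl (by lia) _ (hΩ n hω)]
  have hfinal : ∀ᶠ n : ℕ in atTop, 2 * l * Λ ≤ ε * n :=
    (tendsto_natCast_atTop_atTop.const_mul_atTop hε).eventually_ge_atTop _
  filter_upwards [hfinal] with n hn ω hω
  linarith [hgrowth n ω hω]

theorem isUniform_of_frequently_cocycleRecurrent (hΩ : ∀ n : ℕ, Set.MapsTo (shift (n : ℤ)) Ω Ω)
    (hA : BddAbove ((fun ω => slNorm (A ω)) '' Ω)) {K : ℕ}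
    (h : ∃ᶠ L in atTop, CocycleRecurrent Ω A K L) : IsUniform Ω A := by
  have hbdd := bddAbove_logNorm_image hΩ hA
  set Λ := maxExponent Ω A
  refine ⟨Λ, Metric.tendstoUniformlyOn_iff.2 fun ε hε => ?_⟩
  have hlow : ∀ᶠ n : ℕ in atTop, ∀ ω ∈ Ω, (Λ - ε) * n < logNorm A n ω := by
    rcases lt_or_ge Λ ε with hlt | hge
    · filter_upwards [eventually_gt_atTop 0] with n hn ω _
      exact (mul_neg_of_neg_of_pos (sub_neg.2 hlt) (Nat.cast_pos.2 hn)).trans_le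
        (logNorm_nonneg n ω)
    · filter_upwards [eventually_le_logNorm hΩ hbdd h (ε := ε / 10) (by positivity) (by linarith),
        eventually_gt_atTop 0] with n hn hpos ω hω
      refine (mul_lt_mul_of_pos_right ?_ (Nat.cast_pos.2 hpos)).trans_le (hn ω hω)
      linarith
  filter_upwards [hlow, eventually_logNorm_lt hΩ hbdd hε, eventually_gt_atTop 0]
    with n hlow hup hn ω hω
  have hn : (0 : ℝ) < n := Nat.cast_pos.2 hn
  have hcocycle : Real.log (slNorm (cocycle A n ω)) = logNorm A n ω := by simp [cocycle, logNorm]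
  rw [hcocycle, dist_comm, Real.dist_eq, abs_sub_lt_iff, sub_lt_iff_lt_add', sub_lt_comm,
    div_lt_iff₀ hn, lt_div_iff₀ hn]
  exact ⟨hup ω hω, hlow ω hω⟩

end CocycleGrowth

section LinearRepetitivity

variable {𝒜 : Type*} {Ω : Set (ℤ → 𝒜)}

theorem word_eq_map_range (ω : ℤ → 𝒜) (k : ℤ) (n : ℕ) :
    word ω k n = (List.range n).map fun i : ℕ => ω (k + i) := by
  -- `word` ranges over `List.range n` cast to `List ℤ`, which elaborates to a `flatMap`.
  simp only [word, List.bind_eq_flatMap, List.pure_def, List.map_flatMap, List.map_cons,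
    List.map_nil]
  exact List.map_eq_flatMap.symm

theorem length_word (ω : ℤ → 𝒜) (k : ℤ) (n : ℕ) : (word ω k n).length = n := by
  rw [word_eq_map_range, List.length_map, List.length_range]

theorem getElem_word (ω : ℤ → 𝒜) (k : ℤ) (n i : ℕ) (hi : i < (word ω k n).length) :
    (word ω k n)[i] = ω (k + i) := by
  simp only [word_eq_map_range, List.getElem_map, List.getElem_range]

theorem word_shift (ω : ℤ → 𝒜) (j k : ℤ) (n : ℕ) : word (shift j ω) k n = word ω (k + j) n := by
  simp only [word_eq_map_range, shift, add_right_comm]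

theorem exists_shift_eq_of_word_infix {ω ρ : ℤ → 𝒜} {i j : ℤ} {m n : ℕ}
    (h : word ρ j m <:+: word ω i n) :
    ∃ t, t + m ≤ n ∧ ∀ s < m, ω (i + t + s) = ρ (j + s) := by
  obtain ⟨t, hle, ht⟩ := List.infix_iff_getElem?.1 h
  rw [length_word, length_word] at hle
  refine ⟨t, by lia, fun s hs => ?_⟩
  have := ht s (by rwa [length_word])
  rw [List.getElem?_eq_getElem (by rw [length_word]; lia), getElem_word, getElem_word,
    Option.some_inj] at this
  rw [← this]
  push_cast
  ring_nf

theorem cocycleP_congr {A : (ℤ → 𝒜) → SL2} {ω ρ : ℤ → 𝒜} {m : ℕ}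
    (h : ∀ i < m, A (shift i ω) = A (shift i ρ)) : cocycleP A m ω = cocycleP A m ρ := by
  induction m with
  | zero => rfl
  | succ m ih =>
    rw [cocycleP, cocycleP, h m m.lt_succ_self, ih fun i hi => h i (hi.trans m.lt_succ_self)]

theorem LocConstOn.finite_image [Finite 𝒜] {β : Type*} {f : (ℤ → 𝒜) → β} (hf : LocConstOn Ω f) :
    (f '' Ω).Finite := by
  obtain ⟨N, hN⟩ := hf
  choose ω hω hfω using fun b : f '' Ω => b.2
  let window (b : f '' Ω) (i : Set.Icc (-N : ℤ) N) : 𝒜 := ω b i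
  refine Finite.of_injective window fun b c hbc => Subtype.ext ?_
  rw [← hfω b, ← hfω c]
  exact hN _ (hω b) _ (hω c) fun i hi => congrFun hbc ⟨i, abs_le.1 hi⟩

/-- Linear repetitivity of `Ω` at scale `L`: every word of length `L` of `Ω` occurs in every
word of length `K * L` of `Ω`. -/
def RepetitiveAt (Ω : Set (ℤ → 𝒜)) (K L : ℕ) : Prop :=
  ∀ ω ∈ Ω, ∀ ρ ∈ Ω, ∀ i j : ℤ, word ρ j L <:+: word ω i (K * L)

theorem RepetitiveAt.cocycleRecurrent {A : (ℤ → 𝒜) → SL2} {K L N : ℕ} (h : RepetitiveAt Ω K L)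
    (hΩ : ∀ n : ℕ, Set.MapsTo (shift (n : ℤ)) Ω Ω) (hL : 4 * N ≤ L)
    (hN : ∀ ω ∈ Ω, ∀ ρ ∈ Ω, (∀ i : ℤ, |i| ≤ (N : ℤ) → ω i = ρ i) → A ω = A ρ) :
    CocycleRecurrent Ω A (2 * K) (L - 2 * N) := by
  intro ω hω ρ hρ m hm
  obtain ⟨t, ht, heq⟩ := exists_shift_eq_of_word_infix (h ω hω ρ hρ (-N) (-N))
  have htK : t ≤ 2 * K * (L - 2 * N) := by
    have : K * L ≤ K * (2 * (L - 2 * N)) := Nat.mul_le_mul_left K (by lia)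
    linarith
  refine ⟨t, htK, cocycleP_congr fun s hs => ?_⟩
  refine hN _ (hΩ s (hΩ t hω)) _ (hΩ s hρ) fun i hi => ?_
  rw [abs_le] at hi
  lift i + s + N to ℕ using by lia with k hk
  have := heq k (by lia)
  simp only [shift]
  convert this using 2 <;> lia

theorem isUniform_of_frequently_repetitiveAt [Finite 𝒜] {A : (ℤ → 𝒜) → SL2}
    (hΩ : ∀ n : ℕ, Set.MapsTo (shift (n : ℤ)) Ω Ω) (hA : LocConstOn Ω A) {K : ℕ}
    (h : ∃ᶠ L in atTop, RepetitiveAt Ω K L) : IsUniform Ω A := by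
  have hbdd : BddAbove ((fun ω => slNorm (A ω)) '' Ω) := by
    rw [← Set.image_image]
    exact (hA.finite_image.image slNorm).bddAbove
  obtain ⟨N, hN⟩ := hA
  refine isUniform_of_frequently_cocycleRecurrent hΩ hbdd (K := 2 * K) ?_
  refine (tendsto_sub_atTop_nat (2 * N)).frequently ?_
  exact (h.and_eventually (eventually_ge_atTop (4 * N))).mono
    fun L ⟨hL, hLN⟩ => hL.cocycleRecurrent hΩ hLN hN

end LinearRepetitivity

section BlockConcatenations

variable {β : Type*} {u v w x y z : List β}

theorem infix_append_iff_exists_prefix :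
    x <:+: y ++ z ↔ x <:+: z ∨ ∃ p : List β, p.length < y.length ∧ p ++ x <+: y ++ z := by
  refine ⟨fun ⟨p, r, h⟩ => ?_, ?_⟩
  · rcases lt_or_ge p.length y.length with hp | hp
    · exact .inr ⟨p, hp, r, h⟩
    · obtain ⟨s, rfl⟩ := List.prefix_of_prefix_length_le (h ▸ List.prefix_append y z)
        ((List.prefix_append p x).trans (List.prefix_append _ r)) hp
      simp only [List.append_assoc, List.append_cancel_left_eq] at h
      exact .inl ⟨s, r, by rw [← h, List.append_assoc]⟩
  · rintro (h | ⟨p, -, h⟩)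
    · exact List.infix_append_of_infix_right h
    · exact (List.suffix_append p x).isInfix.trans h.isInfix

theorem infix_or_infix_of_prefix (h : x <:+: y ++ z) (hv : v <+: y ++ z)
    (hlen : y.length + x.length ≤ v.length + 1) : x <:+: v ∨ x <:+: z := by
  rcases infix_append_iff_exists_prefix.1 h with h | ⟨p, hp, h⟩
  · exact .inr h
  · have := List.prefix_of_prefix_length_le h hv (by rw [List.length_append]; lia)
    exact .inl ((List.suffix_append p x).isInfix.trans this.isInfix)

theorem prefix_infix_or_infix {t : List β} (h : x <:+: y ++ z) (hv : v <+: z ++ t)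
    (hlen : y.length + v.length ≤ x.length) : v <:+: x ∨ x <:+: z := by
  rcases infix_append_iff_exists_prefix.1 h with h | ⟨p, hp, h⟩
  · exact .inr h
  obtain ⟨s, hs⟩ := List.prefix_of_prefix_length_le (List.prefix_append y z) h
    (by rw [List.length_append]; lia)
  have hslen := congrArg List.length hs
  rw [List.length_append, List.length_append] at hslen
  have hsx : s <:+ x := List.suffix_of_suffix_length_le ⟨y, hs⟩ (List.suffix_append p x) (by lia)
  rw [← hs, List.prefix_append_right_inj] at h
  have hvs : v <+: s :=
    List.prefix_of_prefix_length_le hv (h.trans (List.prefix_append z t)) (by lia)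
  exact .inl (hvs.isInfix.trans hsx.isInfix)

/-- `u ++ w` and `w ++ u` agree except possibly in their last two letters, as holds for two
consecutive standard words `u = s_n` and `w = s_{n-1}`. -/
def NearlyCommute (u w : List β) : Prop :=
  ∃ p : List β, p <+: u ++ w ∧ p <+: w ++ u ∧ p.length + 2 = u.length + w.length

theorem NearlyCommute.flatten_replicate_append (h : NearlyCommute u w) (d : ℕ) :
    NearlyCommute ((List.replicate d u).flatten ++ w) u := by
  obtain ⟨p, huw, hwu, hlen⟩ := h
  have hcomm : u ++ (List.replicate d u).flatten = (List.replicate d u).flatten ++ u := by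
    rw [← List.flatten_cons, ← List.replicate_succ, List.replicate_succ', List.flatten_append,
      List.flatten_singleton]
  refine ⟨(List.replicate d u).flatten ++ p, ?_, ?_, ?_⟩
  · rwa [List.append_assoc, List.prefix_append_right_inj]
  · rwa [← List.append_assoc, hcomm, List.append_assoc, List.prefix_append_right_inj]
  · simp only [List.length_append]
    lia

theorem NearlyCommute.dropLast_prefix_append (h : NearlyCommute u w) (hw : w ≠ []) :
    u.dropLast <+: w ++ u := by
  obtain ⟨p, huw, hwu, hlen⟩ := h
  have := List.length_pos_iff.2 hw
  refine List.IsPrefix.trans ?_ hwu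
  refine List.prefix_of_prefix_length_le (u.dropLast_prefix.trans (List.prefix_append u w)) huw ?_
  rw [List.length_dropLast]
  lia

/-- Concatenations of the blocks `u` and `u ++ w`. For `u = s_n` and `w = s_{n-1}` all later
standard words are of this form. -/
inductive BlockConcat (u w : List β) : List β → Prop
  | nil : BlockConcat u w []
  | append_left {x : List β} : BlockConcat u w x → BlockConcat u w (u ++ x)
  | append_pair {x : List β} : BlockConcat u w x → BlockConcat u w (u ++ (w ++ x))

namespace BlockConcat

theorem append (hx : BlockConcat u w x) (hy : BlockConcat u w y) : BlockConcat u w (x ++ y) := by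
  induction hx with
  | nil => exact hy
  | append_left _ ih => simpa only [List.append_assoc] using ih.append_left
  | append_pair _ ih => simpa only [List.append_assoc] using ih.append_pair

theorem flatten_replicate (hx : BlockConcat u w x) (d : ℕ) :
    BlockConcat u w (List.replicate d x).flatten := by
  induction d with
  | zero => exact .nil
  | succ d ih => simpa only [List.replicate_succ, List.flatten_cons] using hx.append ih

theorem self : BlockConcat u w u := by
  simpa only [List.append_nil] using nil.append_left

theorem flatten_replicate_succ_append (d : ℕ) :
    BlockConcat u w ((List.replicate (d + 1) u).flatten ++ w) := by
  have : BlockConcat u w (u ++ w) := by simpa only [List.append_nil] using nil.append_pair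
  simpa only [List.replicate_succ', List.flatten_append, List.flatten_singleton,
    List.append_assoc] using (self.flatten_replicate d).append this

theorem prefix_append_self (hx : BlockConcat u w x) : u <+: x ++ u := by
  cases hx <;> simp

theorem append_dropLast_prefix (hx : BlockConcat u w x) (h : NearlyCommute u w) (hw : w ≠ []) :
    u ++ u.dropLast <+: x ++ (u ++ u) := by
  cases hx with
  | nil => simpa using u.dropLast_prefix
  | @append_left y hy =>
    rw [List.append_assoc, List.prefix_append_right_inj, ← List.append_assoc]
    exact (u.dropLast_prefix.trans hy.prefix_append_self).trans (List.prefix_append _ _)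
  | @append_pair y hy =>
    rw [List.append_assoc, List.prefix_append_right_inj, List.append_assoc, ← List.append_assoc y]
    refine (h.dropLast_prefix_append hw).trans ?_
    rw [List.prefix_append_right_inj]
    exact hy.prefix_append_self.trans (List.prefix_append _ _)

theorem infix_append_dropLast (hy : BlockConcat u w y) (h : NearlyCommute u w) (hw : w ≠ [])
    (hwu : w <+: u) (hx : x <:+: y ++ u) (hlen : x.length < u.length) :
    x <:+: u ++ u.dropLast := by
  induction hy with
  | nil => exact List.infix_append_of_infix_left hx
  | @append_left z hz ih =>
    rw [List.append_assoc] at hx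
    refine (infix_or_infix_of_prefix hx ?_ ?_).elim id ih
    · rw [List.prefix_append_right_inj]
      exact u.dropLast_prefix.trans hz.prefix_append_self
    · rw [List.length_append, List.length_dropLast]
      lia
  | @append_pair z hz ih =>
    rw [List.append_assoc, List.append_assoc] at hx
    have hwz : w ++ u <+: w ++ (z ++ u) := by
      rw [List.prefix_append_right_inj]
      exact hz.prefix_append_self
    refine (infix_or_infix_of_prefix hx ?_ ?_).elim id fun hx => ?_
    · rw [List.prefix_append_right_inj]
      exact (h.dropLast_prefix_append hw).trans hwz
    · rw [List.length_append, List.length_dropLast]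
      lia
    obtain ⟨p, hpuw, hpwu, hp⟩ := h
    refine (infix_or_infix_of_prefix hx (hpwu.trans hwz) (by lia)).elim (fun hxp => ?_) ih
    have hpuu : p <+: u ++ u :=
      hpuw.trans ((List.prefix_append_right_inj u).2 hwu)
    refine hxp.trans (List.prefix_of_prefix_length_le hpuu
      ((List.prefix_append_right_inj u).2 u.dropLast_prefix) ?_).isInfix
    rw [List.length_append, List.length_dropLast]
    have := hwu.length_le
    lia

theorem append_dropLast_infix (hy : BlockConcat u w y) (h : NearlyCommute u w) (hw : w ≠ [])
    (hwu : w <+: u) (hx : x <:+: y) (hlen : 4 * u.length ≤ x.length) :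
    u ++ u.dropLast <:+: x := by
  have := hwu.length_le
  induction hy with
  | nil =>
    obtain rfl := List.infix_nil.1 hx
    rw [List.length_nil] at hlen
    have := List.length_pos_iff.2 hw
    lia
  | append_left hz ih =>
    refine (prefix_infix_or_infix hx (hz.append_dropLast_prefix h hw) ?_).elim id ih
    rw [List.length_append, List.length_dropLast]
    lia
  | append_pair hz ih =>
    rw [← List.append_assoc] at hx
    refine (prefix_infix_or_infix hx (hz.append_dropLast_prefix h hw) ?_).elim id ih
    rw [List.length_append, List.length_append, List.length_dropLast]
    lia

theorem infix_of_length_lt_of_le_length {x' y' : List β} (hy : BlockConcat u w y)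
    (hy' : BlockConcat u w y') (h : NearlyCommute u w) (hw : w ≠ []) (hwu : w <+: u) (hx : x <:+: y)
    (hxlen : x.length < u.length) (hx' : x' <:+: y') (hxlen' : 4 * u.length ≤ x'.length) :
    x <:+: x' :=
  (hy.infix_append_dropLast h hw hwu (List.infix_append_of_infix_left hx) hxlen).trans
    (hy'.append_dropLast_infix h hw hwu hx' hxlen')

end BlockConcat

end BlockConcatenations

section Sturmian

variable {α : ℝ}

theorem mapsTo_gaussMap :
    Set.MapsTo gaussMap ({x | Irrational x} ∩ Set.Ioo 0 1) ({x | Irrational x} ∩ Set.Ioo 0 1) := by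
  rintro x ⟨hx, -⟩
  have hg : Irrational (gaussMap x) := by
    simpa only [gaussMap, one_div] using hx.inv.sub_intCast ⌊x⁻¹⌋
  exact ⟨hg, (Int.fract_nonneg (1 / x)).lt_of_ne' hg.ne_zero, Int.fract_lt_one (1 / x)⟩

theorem one_le_cfSeq (hα : Irrational α) (h : α ∈ Set.Ioo 0 1) (n : ℕ) : 1 ≤ cfSeq α n := by
  obtain ⟨-, hpos, hlt⟩ := mapsTo_gaussMap.iterate n ⟨hα, h⟩
  exact Nat.le_floor (by rw [Nat.cast_one, one_le_div hpos]; exact hlt.le)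

theorem exists_sturmW_add_two (α : ℝ) (n : ℕ) : ∃ d, sturmW α (n + 2) =
    (List.replicate d (sturmW α (n + 1))).flatten ++ sturmW α n := by
  cases n with
  | zero => exact ⟨cfSeq α 0 - 1, by simp [sturmW]⟩
  | succ n => exact ⟨cfSeq α (n + 1), rfl⟩

theorem exists_sturmW_add_three (hcf : ∀ n, 1 ≤ cfSeq α n) (n : ℕ) : ∃ d, sturmW α (n + 3) =
    (List.replicate (d + 1) (sturmW α (n + 2))).flatten ++ sturmW α (n + 1) :=
  ⟨cfSeq α (n + 1) - 1, by rw [Nat.sub_add_cancel (hcf _), sturmW]⟩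

theorem sturmW_suffix_add_two_mul (α : ℝ) (m j : ℕ) : sturmW α m <:+ sturmW α (m + 2 * j) := by
  induction j with
  | zero => exact List.suffix_rfl
  | succ j ih =>
    obtain ⟨d, hd⟩ := exists_sturmW_add_two α (m + 2 * j)
    exact ih.trans ⟨_, hd.symm⟩

theorem sturmW_ne_nil (α : ℝ) : ∀ n, sturmW α n ≠ []
  | 0 => List.cons_ne_nil _ _
  | 1 => List.cons_ne_nil _ _
  | n + 2 => by
    obtain ⟨d, hd⟩ := exists_sturmW_add_two α n
    exact hd ▸ List.append_ne_nil_of_right_ne_nil _ (sturmW_ne_nil α n)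

theorem nearlyCommute_sturmW (α : ℝ) (n : ℕ) :
    NearlyCommute (sturmW α (n + 1)) (sturmW α n) := by
  induction n with
  | zero => exact ⟨[], List.nil_prefix, List.nil_prefix, rfl⟩
  | succ n ih =>
    obtain ⟨d, hd⟩ := exists_sturmW_add_two α n
    exact hd ▸ ih.flatten_replicate_append d

theorem sturmW_prefix_succ (hcf : ∀ n, 1 ≤ cfSeq α n) (n : ℕ) :
    sturmW α (n + 2) <+: sturmW α (n + 3) := by
  obtain ⟨d, hd⟩ := exists_sturmW_add_three hcf n
  rw [hd, List.replicate_succ, List.flatten_cons, List.append_assoc]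
  exact List.prefix_append _ _

theorem le_length_sturmW (hcf : ∀ n, 1 ≤ cfSeq α n) (n : ℕ) : n ≤ (sturmW α (n + 2)).length := by
  induction n with
  | zero => exact Nat.zero_le _
  | succ n ih =>
    obtain ⟨d, hd⟩ := exists_sturmW_add_three hcf n
    have := List.length_pos_iff.2 (sturmW_ne_nil α (n + 1))
    rw [hd, List.replicate_succ, List.flatten_cons, List.length_append, List.length_append]
    lia

theorem blockConcat_sturmW (hcf : ∀ n, 1 ≤ cfSeq α n) (n m : ℕ) :
    BlockConcat (sturmW α (n + 3)) (sturmW α (n + 2)) (sturmW α (n + 3 + m)) := by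
  induction m using Nat.twoStepInduction with
  | zero => exact .self
  | one =>
    obtain ⟨d, hd⟩ := exists_sturmW_add_three hcf (n + 1)
    exact hd ▸ .flatten_replicate_succ_append d
  | more m ih ih' =>
    obtain ⟨d, hd⟩ := exists_sturmW_add_two α (n + 3 + m)
    exact hd ▸ (ih'.flatten_replicate d).append ih

theorem exists_word_infix_blockConcat (hcf : ∀ n, 1 ≤ cfSeq α n) {ω : ℤ → Fin 2}
    (hω : ω ∈ sturmΩ α) (i : ℤ) (l n : ℕ) :
    ∃ y, BlockConcat (sturmW α (n + 3)) (sturmW α (n + 2)) y ∧ word ω i l <:+: y := by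
  obtain ⟨m, hm⟩ := hω i l
  refine ⟨_, blockConcat_sturmW hcf n (m + n + 3), hm.trans ?_⟩
  have := (sturmW_suffix_add_two_mul α m (n + 3)).isInfix
  rwa [show m + 2 * (n + 3) = n + 3 + (m + n + 3) by ring] at this

theorem frequently_repetitiveAt_sturmΩ (hcf : ∀ n, 1 ≤ cfSeq α n) :
    ∃ᶠ L in atTop, RepetitiveAt (sturmΩ α) 8 L := by
  refine frequently_atTop.2 fun a => ?_
  have hlen := le_length_sturmW hcf (a + 2 + 1)
  refine ⟨(sturmW α (a + 2 + 3)).length - 1, by lia, fun ω hω ρ hρ i j => ?_⟩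
  obtain ⟨y, hy, hρy⟩ := exists_word_infix_blockConcat hcf hρ j
    ((sturmW α (a + 2 + 3)).length - 1) (a + 2)
  obtain ⟨y', hy', hωy⟩ := exists_word_infix_blockConcat hcf hω i
    (8 * ((sturmW α (a + 2 + 3)).length - 1)) (a + 2)
  refine hy.infix_of_length_lt_of_le_length hy' (nearlyCommute_sturmW α _) (sturmW_ne_nil α _)
    (sturmW_prefix_succ hcf _) hρy ?_ hωy ?_ <;> rw [length_word] <;> lia

theorem shift_mem_sturmΩ (α : ℝ) (k : ℤ) : Set.MapsTo (shift k) (sturmΩ α) (sturmΩ α) :=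
  fun ω hω i n => word_shift ω k i n ▸ hω (i + k) n

end Sturmian

/-- Every locally constant `SL(2,ℝ)`-valued function on a Sturmian
subshift is uniform. -/
theorem statement18 (α : ℝ) (hirr : Irrational α) (h0 : 0 < α) (h1 : α < 1)
    (A : (ℤ → Fin 2) → SL2) (hA : LocConstOn (sturmΩ α) A) :
    IsUniform (sturmΩ α) A := by
  have hcf : ∀ n, 1 ≤ cfSeq α n := one_le_cfSeq hirr ⟨h0, h1⟩
  exact isUniform_of_frequently_repetitiveAt (fun n => shift_mem_sturmΩ α n) hA
    (frequently_repetitiveAt_sturmΩ hcf)
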